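/- On the Robinson–Trautman spacetime with constants μ₁, μ₂ satisfying the condition that μ₂F₁₃ + μ₁F₁₁ = 0 identically (with F₁₁, F₁₃ as defined below) and F₁ - 2a + 4br ≠ 0, the vector field ξ = μ₁ ∂/∂x + μ₂ ∂/∂y is a Ricci collineation, i.e. L_ξ S = 0. -/

import Mathlib

open scoped BigOperators

noncomputable section

/-- Points of the coordinate chart `(t,r,x,y)`. -/
abbrev RTPt := Fin 4 → ℝ

/-- Partial derivative in coordinate direction `i`. -/
def RTpd (i : Fin 4) (F : RTPt → ℝ) (p : RTPt) : ℝ :=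
  deriv (fun s => F (Function.update p i s)) (p i)

/-- partial derivative of `f(x,y)` in `x`. -/
def pX (f : ℝ → ℝ → ℝ) (x y : ℝ) : ℝ := deriv (fun s => f s y) x

/-- partial derivative of `f(x,y)` in `y`. -/
def pY (f : ℝ → ℝ → ℝ) (x y : ℝ) : ℝ := deriv (fun s => f x s) y

/-- The Robinson–Trautman metric components. -/
def RTg (a b d : ℝ) (f : ℝ → ℝ → ℝ) (i j : Fin 4) (p : RTPt) : ℝ :=
  if i = 0 ∧ j = 0 then -2 * (a - 2 * b * p 1 - d / p 1)
  else if (i = 0 ∧ j = 1) ∨ (i = 1 ∧ j = 0) then 1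
  else if (i = 2 ∧ j = 2) ∨ (i = 3 ∧ j = 3) then -(p 1)^2 / (f (p 2) (p 3))^2
  else 0

/-- The inverse Robinson–Trautman metric components. -/
def RTgInv (a b d : ℝ) (f : ℝ → ℝ → ℝ) (i j : Fin 4) (p : RTPt) : ℝ :=
  if i = 1 ∧ j = 1 then 2 * (a - 2 * b * p 1 - d / p 1)
  else if (i = 0 ∧ j = 1) ∨ (i = 1 ∧ j = 0) then 1
  else if (i = 2 ∧ j = 2) ∨ (i = 3 ∧ j = 3) then -(f (p 2) (p 3))^2 / (p 1)^2
  else 0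

/-- Christoffel symbols `Γ^k_{ij}` of the Levi-Civita connection of the RT metric. -/
def RTGamma (a b d : ℝ) (f : ℝ → ℝ → ℝ) (k i j : Fin 4) (p : RTPt) : ℝ :=
  (1/2) * ∑ l : Fin 4, RTgInv a b d f k l p *
    (RTpd i (RTg a b d f l j) p + RTpd j (RTg a b d f l i) p - RTpd l (RTg a b d f i j) p)

/-- `(0,4)` Riemann curvature tensor
`R_{pqrs} = g_{pα}(∂_s Γ^α_{qr} - ∂_r Γ^α_{qs} + Γ^β_{qr}Γ^α_{βs} - Γ^β_{qs}Γ^α_{βr})`. -/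
def RTRiem (a b d : ℝ) (f : ℝ → ℝ → ℝ) (i j k l : Fin 4) (p : RTPt) : ℝ :=
  ∑ α : Fin 4, RTg a b d f i α p *
    (RTpd l (RTGamma a b d f α j k) p - RTpd k (RTGamma a b d f α j l) p
      + ∑ β : Fin 4, (RTGamma a b d f β j k p * RTGamma a b d f α β l p
          - RTGamma a b d f β j l p * RTGamma a b d f α β k p))

/-- Ricci tensor `S_{ij} = R^k_{ikj}` of the RT metric. -/
def RTRic (a b d : ℝ) (f : ℝ → ℝ → ℝ) (i j : Fin 4) (p : RTPt) : ℝ :=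
  ∑ k : Fin 4, ∑ l : Fin 4, RTgInv a b d f k l p * RTRiem a b d f l i k j p

/-- Scalar curvature of the RT metric. -/
def RTScal (a b d : ℝ) (f : ℝ → ℝ → ℝ) (p : RTPt) : ℝ :=
  ∑ i : Fin 4, ∑ j : Fin 4, RTgInv a b d f i j p * RTRic a b d f i j p

/-- Lie derivative of a `(0,2)` tensor field along a vector field `X`. -/
def RTlie2 (X : RTPt → Fin 4 → ℝ) (T : Fin 4 → Fin 4 → RTPt → ℝ) (i j : Fin 4) (p : RTPt) : ℝ :=
  (∑ k : Fin 4, X p k * RTpd k (T i j) p)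
  + (∑ k : Fin 4, T k j p * RTpd i (fun q => X q k) p)
  + (∑ k : Fin 4, T i k p * RTpd j (fun q => X q k) p)

/-- Lie derivative of a `(0,4)` tensor field along a vector field `X`. -/
def RTlie4 (X : RTPt → Fin 4 → ℝ) (T : Fin 4 → Fin 4 → Fin 4 → Fin 4 → RTPt → ℝ)
    (i j k l : Fin 4) (p : RTPt) : ℝ :=
  (∑ m : Fin 4, X p m * RTpd m (T i j k l) p)
  + (∑ m : Fin 4, T m j k l p * RTpd i (fun q => X q m) p)
  + (∑ m : Fin 4, T i m k l p * RTpd j (fun q => X q m) p)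
  + (∑ m : Fin 4, T i j m l p * RTpd k (fun q => X q m) p)
  + (∑ m : Fin 4, T i j k m p * RTpd l (fun q => X q m) p)

/-- Kulkarni–Nomizu product of two `(0,2)` tensor fields. -/
def RTKN (A B : Fin 4 → Fin 4 → RTPt → ℝ) (i j k l : Fin 4) (p : RTPt) : ℝ :=
  A i l p * B j k p - A i k p * B j l p + A j k p * B i l p - A j l p * B i k p

/-- `F₁ = f_x² + f_y² - f(f_{xx} + f_{yy})`. -/
def F1 (f : ℝ → ℝ → ℝ) (x y : ℝ) : ℝ :=
  (pX f x y)^2 + (pY f x y)^2 - f x y * (pX (pX f) x y + pY (pY f) x y)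

/-- `F₁ᵐ = f_x² + f_y² - f(f_{xx} - f_{yy})`. -/
def F1m (f : ℝ → ℝ → ℝ) (x y : ℝ) : ℝ :=
  (pX f x y)^2 + (pY f x y)^2 - f x y * (pX (pX f) x y - pY (pY f) x y)

/-- `F₁₁` from the paper. -/
def F11 (a b : ℝ) (f : ℝ → ℝ → ℝ) (r x y : ℝ) : ℝ :=
  -2*(pX f x y)^3
  + pX f x y * (4*a - 16*b*r - 2*(pY f x y)^2 + f x y * (pY (pY f) x y + 3*pX (pX f) x y))
  - f x y * (-2*pY f x y * pY (pX f) x y + f x y * (pX (pX (pX f)) x y + pY (pY (pX f)) x y))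

/-- `F₁₃` from the paper. -/
def F13 (a b : ℝ) (f : ℝ → ℝ → ℝ) (r x y : ℝ) : ℝ :=
  -2*(pY f x y)^3
  + pY f x y * (4*a - 16*b*r - 2*(pX f x y)^2 + f x y * (3*pY (pY f) x y + pX (pX f) x y))
  - f x y * (-2*pX f x y * pY (pX f) x y + f x y * (pY (pY (pY f)) x y + pY (pX (pX f)) x y))

open Function Filter Topology

/-!
With `H = a - 2br - d/r` the metric is `-2H dt² + 2 dt dr - (r²/f²)(dx² + dy²)`, so its components
and its Christoffel symbols are, up to sign, products of a function of `r` and a function of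
`(x,y)`. The Ricci tensor comes out as `S_{tr} = -4b/r`, `S_{tt} = 8bH/r` and
`S_{xx} = S_{yy} = (F₁ - 2a + 8br)/f²`, all other components being zero. As `ξ` has constant
components, `L_ξ S = μ₁ ∂_x S + μ₂ ∂_y S` componentwise, and this can be nonzero only for
`S_{xx} = S_{yy}`, where `∂_x S_{xx} = F₁₁/f³` and `∂_y S_{xx} = F₁₃/f³`.
-/

section PartialDerivatives

variable {u v : ℝ → ℝ → ℝ} {x y : ℝ}

theorem hasDerivAt_pX (hu : DifferentiableAt ℝ (uncurry u) (x, y)) :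
    HasDerivAt (fun s => u s y) (pX u x y) x :=
  have hline : DifferentiableAt ℝ (fun s : ℝ => (s, y)) x := by fun_prop
  (DifferentiableAt.comp (f := fun s : ℝ => (s, y)) x hu hline).hasDerivAt

theorem hasDerivAt_pY (hu : DifferentiableAt ℝ (uncurry u) (x, y)) :
    HasDerivAt (fun s => u x s) (pY u x y) y :=
  have hline : DifferentiableAt ℝ (fun s : ℝ => (x, s)) y := by fun_prop
  (DifferentiableAt.comp (f := fun s : ℝ => (x, s)) y hu hline).hasDerivAt

theorem pX_eq_fderiv (hu : DifferentiableAt ℝ (uncurry u) (x, y)) :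
    pX u x y = fderiv ℝ (uncurry u) (x, y) (1, 0) :=
  (HasFDerivAt.comp_hasDerivAt (f := fun s : ℝ => (s, y)) x hu.hasFDerivAt
    ((hasDerivAt_id x).prodMk (hasDerivAt_const x y))).deriv

theorem pY_eq_fderiv (hu : DifferentiableAt ℝ (uncurry u) (x, y)) :
    pY u x y = fderiv ℝ (uncurry u) (x, y) (0, 1) :=
  (HasFDerivAt.comp_hasDerivAt (f := fun s : ℝ => (x, s)) y hu.hasFDerivAt
    ((hasDerivAt_const y x).prodMk (hasDerivAt_id y))).deriv

theorem uncurry_pX (hu : Differentiable ℝ (uncurry u)) :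
    uncurry (pX u) = fun z => fderiv ℝ (uncurry u) z (1, 0) :=
  funext fun z => pX_eq_fderiv (hu z)

theorem uncurry_pY (hu : Differentiable ℝ (uncurry u)) :
    uncurry (pY u) = fun z => fderiv ℝ (uncurry u) z (0, 1) :=
  funext fun z => pY_eq_fderiv (hu z)

theorem contDiff_pX {n : WithTop ℕ∞} (hu : ContDiff ℝ (n + 1) (uncurry u)) :
    ContDiff ℝ n (uncurry (pX u)) := by
  rw [uncurry_pX (hu.differentiable (by simp))]
  exact (hu.fderiv_right le_rfl).clm_apply contDiff_const

theorem contDiff_pY {n : WithTop ℕ∞} (hu : ContDiff ℝ (n + 1) (uncurry u)) :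
    ContDiff ℝ n (uncurry (pY u)) := by
  rw [uncurry_pY (hu.differentiable (by simp))]
  exact (hu.fderiv_right le_rfl).clm_apply contDiff_const

theorem pX_pY_comm (hu : ContDiff ℝ 2 (uncurry u)) : pX (pY u) = pY (pX u) := by
  have hu1 : Differentiable ℝ (uncurry u) := hu.differentiable (by simp)
  have hu2 : Differentiable ℝ (fderiv ℝ (uncurry u)) :=
    (hu.fderiv_right (m := 1) (by norm_num)).differentiable (by simp)
  funext x y
  have hsymm : IsSymmSndFDerivAt ℝ (uncurry u) (x, y) :=
    hu.contDiffAt.isSymmSndFDerivAt (by simp)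
  rw [pX_eq_fderiv ((contDiff_pY (n := 1) hu).differentiable (by simp) _),
    pY_eq_fderiv ((contDiff_pX (n := 1) hu).differentiable (by simp) _),
    uncurry_pX hu1, uncurry_pY hu1,
    fderiv_clm_apply (hu2 _) (by fun_prop), fderiv_clm_apply (hu2 _) (by fun_prop)]
  simpa using hsymm.eq (1, 0) (0, 1)

@[simp]
theorem pX_one : pX 1 = 0 := by
  funext x _
  exact deriv_const x 1

@[simp]
theorem pY_one : pY 1 = 0 := by
  funext _ y
  exact deriv_const y 1

theorem pX_div (hu : DifferentiableAt ℝ (uncurry u) (x, y))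
    (hv : DifferentiableAt ℝ (uncurry v) (x, y)) (hv0 : v x y ≠ 0) :
    pX (u / v) x y = (pX u x y * v x y - u x y * pX v x y) / v x y ^ 2 :=
  ((hasDerivAt_pX hu).div (hasDerivAt_pX hv) hv0).deriv

theorem pY_div (hu : DifferentiableAt ℝ (uncurry u) (x, y))
    (hv : DifferentiableAt ℝ (uncurry v) (x, y)) (hv0 : v x y ≠ 0) :
    pY (u / v) x y = (pY u x y * v x y - u x y * pY v x y) / v x y ^ 2 :=
  ((hasDerivAt_pY hu).div (hasDerivAt_pY hv) hv0).deriv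

theorem pX_inv_sq (hu : DifferentiableAt ℝ (uncurry u) (x, y)) (hu0 : u x y ≠ 0) :
    pX (u ^ 2)⁻¹ x y = -2 * pX u x y / u x y ^ 3 := by
  refine (((hasDerivAt_pX hu).fun_pow 2).fun_inv (pow_ne_zero 2 hu0)).deriv.trans ?_
  field

theorem pY_inv_sq (hu : DifferentiableAt ℝ (uncurry u) (x, y)) (hu0 : u x y ≠ 0) :
    pY (u ^ 2)⁻¹ x y = -2 * pY u x y / u x y ^ 3 := by
  refine (((hasDerivAt_pY hu).fun_pow 2).fun_inv (pow_ne_zero 2 hu0)).deriv.trans ?_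
  field

end PartialDerivatives

section Chart

variable {F G : RTPt → ℝ} {p : RTPt}

theorem RTpd_congr (h : F =ᶠ[𝓝 p] G) (l : Fin 4) : RTpd l F p = RTpd l G p := by
  have hline : Tendsto (update p l) (𝓝 (p l)) (𝓝 p) := by
    simpa using ((continuous_const (y := p)).update l continuous_id).tendsto (p l)
  exact Filter.EventuallyEq.deriv_eq (hline h)

theorem eventually_radius_ne_zero (hp : p 1 ≠ 0) : ∀ᶠ q in 𝓝 p, q 1 ≠ 0 :=
  (continuous_apply 1).continuousAt.eventually_ne hp

@[simp]
theorem RTpd_const (l : Fin 4) (c : ℝ) : RTpd l (fun _ => c) p = 0 :=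
  deriv_const _ c

@[simp]
theorem RTpd_zero (l : Fin 4) : RTpd l 0 p = 0 :=
  RTpd_const l 0

@[simp]
theorem RTpd_one (l : Fin 4) : RTpd l 1 p = 0 :=
  RTpd_const l 1

@[simp]
theorem RTpd_neg (l : Fin 4) (F : RTPt → ℝ) : RTpd l (-F) p = -RTpd l F p :=
  deriv.fun_neg

theorem RTlie2_const (v : Fin 4 → ℝ) (T : Fin 4 → Fin 4 → RTPt → ℝ) (i j : Fin 4) (p : RTPt) :
    RTlie2 (fun _ => v) T i j p = ∑ k, v k * RTpd k (T i j) p := by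
  simp [RTlie2]

theorem RTpd_x_comp (Φ : ℝ → ℝ → ℝ → ℝ) :
    RTpd 2 (fun q => Φ (q 1) (q 2) (q 3)) p = pX (Φ (p 1)) (p 2) (p 3) := by
  simp [RTpd, pX]

theorem RTpd_y_comp (Φ : ℝ → ℝ → ℝ → ℝ) :
    RTpd 3 (fun q => Φ (q 1) (q 2) (q 3)) p = pY (Φ (p 1)) (p 2) (p 3) := by
  simp [RTpd, pY]

/-- The chart function `φ(r) ψ(x,y)`. Up to sign, the components of the metric and of its
connection all have this form, which coordinate differentiation preserves. -/
def separated (φ : ℝ → ℝ) (ψ : ℝ → ℝ → ℝ) (p : RTPt) : ℝ :=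
  φ (p 1) * ψ (p 2) (p 3)

variable (φ : ℝ → ℝ) (ψ : ℝ → ℝ → ℝ)

@[simp]
theorem RTpd_t_separated : RTpd 0 (separated φ ψ) p = 0 := by
  simp [RTpd, separated]

@[simp]
theorem RTpd_r_separated : RTpd 1 (separated φ ψ) p = separated (deriv φ) ψ p := by
  simp [RTpd, separated]

@[simp]
theorem RTpd_x_separated : RTpd 2 (separated φ ψ) p = separated φ (pX ψ) p := by
  simp [RTpd, separated, pX]

@[simp]
theorem RTpd_y_separated : RTpd 3 (separated φ ψ) p = separated φ (pY ψ) p := by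
  simp [RTpd, separated, pY]

end Chart

section Profile

/-- The function `H(r) = a - 2br - d/r`, in terms of which `g_{tt} = -2H`. -/
def RTH (a b d r : ℝ) : ℝ :=
  a - 2 * b * r - d / r

/-- The derivative `H'(r)` of `RTH`. -/
def RTHDeriv (b d r : ℝ) : ℝ :=
  -2 * b + d / r ^ 2

variable (a b d : ℝ) {r : ℝ}

theorem hasDerivAt_RTH (hr : r ≠ 0) : HasDerivAt (RTH a b d) (RTHDeriv b d r) r := by
  refine ((((hasDerivAt_id r).const_mul (2 * b)).const_sub a).sub
    ((hasDerivAt_const r d).div (hasDerivAt_id r) hr)).congr_deriv ?_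
  simp only [RTHDeriv, id]
  field

theorem hasDerivAt_RTHDeriv (hr : r ≠ 0) :
    HasDerivAt (RTHDeriv b d) (-2 * d / r ^ 3) r := by
  refine (((hasDerivAt_const r d).div (hasDerivAt_pow 2 r) (pow_ne_zero 2 hr)).const_add
    (-2 * b)).congr_deriv ?_
  field

end Profile

section Connection

variable (a b d : ℝ) (f : ℝ → ℝ → ℝ)

theorem RTg_eq_separated (i j : Fin 4) :
    RTg a b d f i j =
      (!![separated (fun r => -2 * RTH a b d r) 1, 1, 0, 0;
          1, 0, 0, 0;
          0, 0, separated (fun r => -r ^ 2) (f ^ 2)⁻¹, 0;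
          0, 0, 0, separated (fun r => -r ^ 2) (f ^ 2)⁻¹] :
        Matrix (Fin 4) (Fin 4) (RTPt → ℝ)) i j := by
  funext p
  fin_cases i <;> fin_cases j <;> simp [RTg, RTH, separated, div_eq_mul_inv]

theorem RTgInv_eq (i j : Fin 4) (p : RTPt) :
    RTgInv a b d f i j p =
      !![0, 1, 0, 0;
         1, 2 * RTH a b d (p 1), 0, 0;
         0, 0, -f (p 2) (p 3) ^ 2 / p 1 ^ 2, 0;
         0, 0, 0, -f (p 2) (p 3) ^ 2 / p 1 ^ 2] i j := by
  fin_cases i <;> fin_cases j <;> simp [RTgInv, RTH]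

/-- The Christoffel symbols `Γ^k_{ij}` in closed form, the index `k` selecting the matrix. They are
stored as functions on the chart, not as values, because the curvature differentiates them. -/
def christoffel : Fin 4 → Matrix (Fin 4) (Fin 4) (RTPt → ℝ) :=
  let H := RTH a b d
  let H' := separated (RTHDeriv b d) 1
  let twoHH' := separated (fun r => 2 * (H r * RTHDeriv b d r)) 1
  let ρ := separated id (f ^ 2)⁻¹
  let twoHρ := separated (fun r => 2 * (H r * r)) (f ^ 2)⁻¹
  let rInv := separated (fun r => r⁻¹) 1
  let X := separated 1 (pX f / f)
  let Y := separated 1 (pY f / f)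
  ![!![H', 0, 0, 0;
       0, 0, 0, 0;
       0, 0, ρ, 0;
       0, 0, 0, ρ],
    !![twoHH', -H', 0, 0;
       -H', 0, 0, 0;
       0, 0, twoHρ, 0;
       0, 0, 0, twoHρ],
    !![0, 0, 0, 0;
       0, 0, rInv, 0;
       0, rInv, -X, -Y;
       0, 0, -Y, X],
    !![0, 0, 0, 0;
       0, 0, 0, rInv;
       0, 0, Y, -X;
       0, rInv, -X, -Y]]

variable {f} {p : RTPt}

theorem RTGamma_eq_christoffel (hf : Differentiable ℝ (uncurry f)) (hf0 : ∀ x y, f x y ≠ 0)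
    (hp : p 1 ≠ 0) (k i j : Fin 4) :
    RTGamma a b d f k i j p = christoffel a b d f k i j p := by
  have hH := (hasDerivAt_RTH a b d hp).deriv
  have h0 := hf0 (p 2) (p 3)
  have hX := pX_inv_sq (hf (p 2, p 3)) h0
  have hY := pY_inv_sq (hf (p 2, p 3)) h0
  simp only [RTGamma, RTg_eq_separated, RTgInv_eq, Fin.sum_univ_four]
  fin_cases k <;> fin_cases i <;> fin_cases j <;>
    simp [christoffel, separated, hH, hX, hY] <;> field

end Connection

section Ricci

/-- The component `S_{xx} = S_{yy}` of the Ricci tensor as a function of `(r,x,y)`. It arises as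
`(F₁ - 2(rH)') / f²` with `H` as in `RTH`. -/
def angularRicci (a b : ℝ) (f : ℝ → ℝ → ℝ) (r x y : ℝ) : ℝ :=
  (F1 f x y - 2 * a + 8 * b * r) / f x y ^ 2

/-- The Ricci tensor in closed form. Its `tr` component is `H'' + 2H'/r`, from which the constant
`d` cancels, and its `tt` component is `-2H` times the `tr` component. -/
def ricci (a b d : ℝ) (f : ℝ → ℝ → ℝ) : Matrix (Fin 4) (Fin 4) (RTPt → ℝ) :=
  let tt := separated (fun r => 8 * b * RTH a b d r / r) 1
  let tr := separated (fun r => -4 * b / r) 1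
  let xx := fun p => angularRicci a b f (p 1) (p 2) (p 3)
  !![tt, tr, 0, 0;
     tr, 0, 0, 0;
     0, 0, xx, 0;
     0, 0, 0, xx]

variable (a b d : ℝ) {f : ℝ → ℝ → ℝ} {p : RTPt}

theorem sum_RTgInv_mul_RTg (hf0 : ∀ x y, f x y ≠ 0) (hp : p 1 ≠ 0) (k m : Fin 4) :
    ∑ l, RTgInv a b d f k l p * RTg a b d f l m p = if k = m then 1 else 0 := by
  have h0 := hf0 (p 2) (p 3)
  fin_cases k <;> fin_cases m <;>
    simp [Fin.sum_univ_four, RTgInv_eq, RTg_eq_separated, separated] <;> field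

theorem sum_RTgInv_mul_sum_RTg_mul (hf0 : ∀ x y, f x y ≠ 0) (hp : p 1 ≠ 0) (k : Fin 4)
    (V : Fin 4 → ℝ) :
    ∑ l, RTgInv a b d f k l p * ∑ m, RTg a b d f l m p * V m = V k := by
  simp_rw [Finset.mul_sum, ← mul_assoc]
  rw [Finset.sum_comm]
  simp [← Finset.sum_mul, sum_RTgInv_mul_RTg a b d hf0 hp]

theorem RTRic_eq_sum_RTGamma (hf0 : ∀ x y, f x y ≠ 0) (hp : p 1 ≠ 0) (i j : Fin 4) :
    RTRic a b d f i j p =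
      ∑ k, (RTpd j (RTGamma a b d f k i k) p - RTpd k (RTGamma a b d f k i j) p
        + ∑ l, (RTGamma a b d f l i k p * RTGamma a b d f k l j p
          - RTGamma a b d f l i j p * RTGamma a b d f k l k p)) := by
  simp only [RTRic, RTRiem, sum_RTgInv_mul_sum_RTg_mul a b d hf0 hp]

theorem RTpd_RTGamma (hf : Differentiable ℝ (uncurry f)) (hf0 : ∀ x y, f x y ≠ 0)
    (hp : p 1 ≠ 0) (l k i j : Fin 4) :
    RTpd l (RTGamma a b d f k i j) p = RTpd l (christoffel a b d f k i j) p :=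
  RTpd_congr ((eventually_radius_ne_zero hp).mono fun _ hq =>
    RTGamma_eq_christoffel a b d hf hf0 hq k i j) l

theorem RTRic_eq_sum_christoffel (hf : Differentiable ℝ (uncurry f)) (hf0 : ∀ x y, f x y ≠ 0)
    (hp : p 1 ≠ 0) (i j : Fin 4) :
    RTRic a b d f i j p =
      ∑ k, (RTpd j (christoffel a b d f k i k) p - RTpd k (christoffel a b d f k i j) p
        + ∑ l, (christoffel a b d f l i k p * christoffel a b d f k l j p
          - christoffel a b d f l i j p * christoffel a b d f k l k p)) := by
  simp only [RTRic_eq_sum_RTGamma a b d hf0 hp, RTpd_RTGamma a b d hf hf0 hp,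
    RTGamma_eq_christoffel a b d hf hf0 hp]

theorem RTRic_eq_ricci (hf : ContDiff ℝ 2 (uncurry f)) (hf0 : ∀ x y, f x y ≠ 0)
    (hp : p 1 ≠ 0) (i j : Fin 4) :
    RTRic a b d f i j p = ricci a b d f i j p := by
  have hdf : Differentiable ℝ (uncurry f) := hf.differentiable (by simp)
  have hdfx : Differentiable ℝ (uncurry (pX f)) := (contDiff_pX hf).differentiable one_ne_zero
  have hdfy : Differentiable ℝ (uncurry (pY f)) := (contDiff_pY hf).differentiable one_ne_zero
  have h0 := hf0 (p 2) (p 3)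
  have hH := hasDerivAt_RTH a b d hp
  have hH' := hasDerivAt_RTHDeriv b d hp
  have hHH' := (hH.fun_mul hH').deriv
  have hHr := (hH.fun_mul (hasDerivAt_id' (p 1))).deriv
  have H_eq : RTH a b d (p 1) = a - 2 * b * p 1 - d / p 1 := rfl
  have H'_eq : RTHDeriv b d (p 1) = -2 * b + d / p 1 ^ 2 := rfl
  have hcomm := pX_pY_comm hf
  simp only [RTRic_eq_sum_christoffel a b d hdf hf0 hp, Fin.sum_univ_four]
  fin_cases i <;> fin_cases j <;>
    simp [christoffel, ricci, separated, hH'.deriv, hHH', hHr, pX_div, pY_div,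
      hdf _, hdfx _, hdfy _, h0, hcomm, angularRicci, F1, H_eq, H'_eq] <;>
    field

theorem pX_angularRicci (hf : ContDiff ℝ 3 (uncurry f)) (r x y : ℝ) (h0 : f x y ≠ 0) :
    pX (angularRicci a b f r) x y = F11 a b f r x y / f x y ^ 3 := by
  have hfx : ContDiff ℝ 2 (uncurry (pX f)) := contDiff_pX hf
  have hfy : ContDiff ℝ 2 (uncurry (pY f)) := contDiff_pY hf
  have df := hasDerivAt_pX (hf.differentiable (by simp) (x, y))
  have dfx := hasDerivAt_pX (hfx.differentiable (by simp) (x, y))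
  have dfy := hasDerivAt_pX (hfy.differentiable (by simp) (x, y))
  have dfxx := hasDerivAt_pX ((contDiff_pX hfx).differentiable one_ne_zero (x, y))
  have dfyy := hasDerivAt_pX ((contDiff_pY hfy).differentiable one_ne_zero (x, y))
  have hcomm : pX (pY f) = pY (pX f) := pX_pY_comm (hf.of_le (by norm_num))
  have hcomm' : pX (pY (pY f)) = pY (pY (pX f)) := by rw [pX_pY_comm hfy, hcomm]
  have dF1 : HasDerivAt (fun s => F1 f s y) _ x :=
    ((dfx.fun_pow 2).fun_add (dfy.fun_pow 2)).fun_sub (df.fun_mul (dfxx.fun_add dfyy))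
  refine (((dF1.sub_const (2 * a)).add_const (8 * b * r)).fun_div (df.fun_pow 2)
    (pow_ne_zero 2 h0)).deriv.trans ?_
  simp only [F11, F1, hcomm, hcomm']
  field

theorem pY_angularRicci (hf : ContDiff ℝ 3 (uncurry f)) (r x y : ℝ) (h0 : f x y ≠ 0) :
    pY (angularRicci a b f r) x y = F13 a b f r x y / f x y ^ 3 := by
  have hfx : ContDiff ℝ 2 (uncurry (pX f)) := contDiff_pX hf
  have hfy : ContDiff ℝ 2 (uncurry (pY f)) := contDiff_pY hf
  have df := hasDerivAt_pY (hf.differentiable (by simp) (x, y))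
  have dfx := hasDerivAt_pY (hfx.differentiable (by simp) (x, y))
  have dfy := hasDerivAt_pY (hfy.differentiable (by simp) (x, y))
  have dfxx := hasDerivAt_pY ((contDiff_pX hfx).differentiable one_ne_zero (x, y))
  have dfyy := hasDerivAt_pY ((contDiff_pY hfy).differentiable one_ne_zero (x, y))
  have dF1 : HasDerivAt (fun s => F1 f x s) _ y :=
    ((dfx.fun_pow 2).fun_add (dfy.fun_pow 2)).fun_sub (df.fun_mul (dfxx.fun_add dfyy))
  refine (((dF1.sub_const (2 * a)).add_const (8 * b * r)).fun_div (df.fun_pow 2)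
    (pow_ne_zero 2 h0)).deriv.trans ?_
  simp only [F13, F1]
  field

theorem RTlie2_RTRic (hf : ContDiff ℝ 3 (uncurry f)) (hf0 : ∀ x y, f x y ≠ 0) (μ₁ μ₂ : ℝ)
    (hp : p 1 ≠ 0) (i j : Fin 4) :
    RTlie2 (fun _ k => if k = 2 then μ₁ else if k = 3 then μ₂ else 0) (RTRic a b d f) i j p =
      if i = j ∧ 2 ≤ i then
        (μ₂ * F13 a b f (p 1) (p 2) (p 3) + μ₁ * F11 a b f (p 1) (p 2) (p 3)) / f (p 2) (p 3) ^ 3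
      else 0 := by
  have hS : RTRic a b d f i j =ᶠ[𝓝 p] ricci a b d f i j :=
    (eventually_radius_ne_zero hp).mono fun q hq =>
      RTRic_eq_ricci a b d (hf.of_le (by norm_num)) hf0 hq i j
  have hx : RTpd 2 (fun q => angularRicci a b f (q 1) (q 2) (q 3)) p = _ :=
    (RTpd_x_comp _).trans (pX_angularRicci a b hf (p 1) _ _ (hf0 (p 2) (p 3)))
  have hy : RTpd 3 (fun q => angularRicci a b f (q 1) (q 2) (q 3)) p = _ :=
    (RTpd_y_comp _).trans (pY_angularRicci a b hf (p 1) _ _ (hf0 (p 2) (p 3)))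
  rw [RTlie2_const]
  simp only [RTpd_congr hS, Fin.sum_univ_four]
  fin_cases i <;> fin_cases j <;> simp [ricci, separated, hx, hy] <;> ring

end Ricci

theorem RT_Ricci_collineation_general (a b d : ℝ) {f : ℝ → ℝ → ℝ}
    (hf : ContDiff ℝ 3 (uncurry f)) (hf0 : ∀ x y, f x y ≠ 0) (μ₁ μ₂ : ℝ)
    {p : RTPt} (hp : p 1 ≠ 0) :
    (∀ i j : Fin 4, RTlie2 (fun _ k => if k = 2 then μ₁ else if k = 3 then μ₂ else 0)
        (RTRic a b d f) i j p = 0) ↔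
      μ₂ * F13 a b f (p 1) (p 2) (p 3) + μ₁ * F11 a b f (p 1) (p 2) (p 3) = 0 := by
  simp only [RTlie2_RTRic a b d hf hf0 μ₁ μ₂ hp]
  refine ⟨fun h => ?_, fun h i j => by simp [h]⟩
  simpa [hf0 (p 2) (p 3)] using h 2 2

/-- Ricci collineation along `ξ = μ₁ ∂/∂x + μ₂ ∂/∂y`
when `μ₂F₁₃ + μ₁F₁₁ = 0` identically. -/
theorem RT_Ricci_collineation (a b d : ℝ) (f : ℝ → ℝ → ℝ)
    (hf : ContDiff ℝ (⊤ : ℕ∞) (Function.uncurry f)) (hf0 : ∀ x y, f x y ≠ 0)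
    (μ₁ μ₂ : ℝ)
    (hcol : ∀ p : RTPt, p 1 ≠ 0 →
      μ₂ * F13 a b f (p 1) (p 2) (p 3) + μ₁ * F11 a b f (p 1) (p 2) (p 3) = 0)
    (hne : ∀ p : RTPt, p 1 ≠ 0 → F1 f (p 2) (p 3) - 2*a + 4*b*p 1 ≠ 0) :
    ∀ p : RTPt, p 1 ≠ 0 → ∀ i j : Fin 4,
      RTlie2 (fun _ k => if k = 2 then μ₁ else if k = 3 then μ₂ else 0)
        (RTRic a b d f) i j p = 0 :=
  have hf3 : ContDiff ℝ 3 (uncurry f) := hf.of_le (WithTop.coe_le_coe.2 (le_top (a := (3 : ℕ∞))))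
  fun p hp => (RT_Ricci_collineation_general a b d hf3 hf0 μ₁ μ₂ hp).2 (hcol p hp)
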